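/- Suppose e ∉ OPT, e ∈ M \ M̃, and u_e ≥ u_a for every a ∈ M △ M̃. Then u_e ≥ Δ_e/4. -/

import Mathlib

/-!
Since `e ∈ M` lies in neither `OPT` nor `M̃`, and all three sets have the same size, some optimal
arm `a` and some arm of `M̃` lie outside `M`. Off `M` the score `μ̃` is the upper confidence
bound `μ̂ + u`, and `M̃` collects its largest values, so some `b ∈ M̃ \ M` has an upper
confidence bound at least that of `a`, which exceeds `μ_(K)`. As `μ̂_b ≤ μ̂_e` and `u_b ≤ u_e`,
the upper confidence bound of `e` exceeds `μ_(K)` too. But it is below `μ_e + 2 u_e`, so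
`Δ_e < 2 u_e`.
-/

theorem exists_mem_notMem_of_card_le {ι : Type*} {s t : Finset ι} {a : ι}
    (hcard : s.card ≤ t.card) (has : a ∈ s) (hat : a ∉ t) : ∃ b ∈ t, b ∉ s :=
  Finset.not_subset.mp fun hts => hat (Finset.eq_of_subset_of_card_le hts hcard ▸ has)

/-- `s` consists of arms with the largest scores `f`: every element of `s` scores at least as high
as every element outside `s`. Ties at the boundary may be broken arbitrarily, so `f` and the size of
`s` need not determine `s`. -/
def IsTopSet {ι α : Type*} [LE α] (f : ι → α) (s : Set ι) : Prop :=
  ∀ i ∈ s, ∀ j ∉ s, f j ≤ f i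

theorem IsTopSet.exists_mem_sdiff_le {ι α : Type*} [Preorder α] {f : ι → α} {s t : Set ι} {a : ι}
    (hs : IsTopSet f s) (hst : (s \ t).Nonempty) (hat : a ∉ t) : ∃ b ∈ s \ t, f a ≤ f b := by
  by_cases has : a ∈ s
  · exact ⟨a, ⟨has, hat⟩, le_rfl⟩
  · obtain ⟨b, hbs, hbt⟩ := hst
    exact ⟨b, ⟨hbs, hbt⟩, hs b hbs a has⟩

theorem stmt_17_general {ι R : Type*} [AddCommGroup R] [LinearOrder R] [IsOrderedAddMonoid R]
    {μ μh μt u : ι → R} {S M Mt : Finset ι} {m : R} {e : ι}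
    (hm : ∀ i ∈ S, m ≤ μ i) (hconf : ∀ i, |μh i - μ i| < u i)
    (hMS : M.card ≤ S.card) (hMMt : M.card ≤ Mt.card)
    (hM : IsTopSet μh (M : Set ι)) (hμt : ∀ i ∉ M, μt i = μh i + u i)
    (hMt : IsTopSet μt (Mt : Set ι))
    (heS : e ∉ S) (heM : e ∈ M) (heMt : e ∉ Mt) (hmax : ∀ b ∈ Mt, b ∉ M → u b ≤ u e) :
    m - μ e < 2 • u e := by
  obtain ⟨a, haS, haM⟩ := exists_mem_notMem_of_card_le hMS heM heS
  obtain ⟨b, ⟨hbMt, hbM⟩, hab⟩ : ∃ b ∈ (Mt \ M : Set ι), μt a ≤ μt b :=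
    hMt.exists_mem_sdiff_le (exists_mem_notMem_of_card_le hMMt heM heMt) haM
  have hμa : μ a < μh a + u a := sub_lt_iff_lt_add'.mp (abs_sub_lt_iff.mp (hconf a)).2
  have hμe : μh e < μ e + u e := sub_lt_iff_lt_add'.mp (abs_sub_lt_iff.mp (hconf e)).1
  rw [sub_lt_iff_lt_add']
  calc
    m ≤ μ a := hm a haS
    _ < μh a + u a := hμa
    _ = μt a := (hμt a haM).symm
    _ ≤ μt b := hab
    _ = μh b + u b := hμt b hbM
    _ ≤ μh e + u e := add_le_add (hM e heM b hbM) (hmax b hbMt hbM)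
    _ < μ e + u e + u e := by gcongr
    _ = μ e + 2 • u e := by rw [two_nsmul, add_assoc]

/-- Suppose e ∉ OPT, e ∈ M \ M̃, and u_e ≥ u_a for every a ∈ M △ M̃.
Then u_e ≥ Δ_e/4. -/
theorem stmt_17 {N K : ℕ} (hK1 : 1 ≤ K) (hKN : K < N)
    (μ : Fin N → ℝ) (OPT : Finset (Fin N)) (mK mK1 : ℝ)
    (hcard : OPT.card = K)
    (horder : mK1 < mK)
    (hin : ∀ i ∈ OPT, mK ≤ μ i)
    (hout : ∀ i ∉ OPT, μ i ≤ mK1)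
    (hattK : ∃ i ∈ OPT, μ i = mK)
    (hattK1 : ∃ i ∉ OPT, μ i = mK1)
    (Δ : Fin N → ℝ)
    (hΔ : ∀ i, Δ i = if i ∈ OPT then μ i - mK1 else mK - μ i)
    (μh u : Fin N → ℝ) (hu : ∀ i, 0 < u i) (hconf : ∀ i, |μh i - μ i| < u i)
    (M Mt : Finset (Fin N)) (hMcard : M.card = K) (hMtcard : Mt.card = K)
    (hMtop : ∀ i ∈ M, ∀ j ∉ M, μh j ≤ μh i)
    (μt : Fin N → ℝ)
    (hμt : ∀ i, μt i = if i ∈ M then μh i - u i else μh i + u i)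
    (hMttop : ∀ i ∈ Mt, ∀ j ∉ Mt, μt j ≤ μt i)
    (e : Fin N) (heO : e ∉ OPT) (he : e ∈ M \ Mt)
    (hmax : ∀ a ∈ (M \ Mt) ∪ (Mt \ M), u a ≤ u e) :
    u e ≥ Δ e / 4 := by
  obtain ⟨heM, heMt⟩ := Finset.mem_sdiff.mp he
  have hgap : mK - μ e < 2 • u e :=
    stmt_17_general hin hconf (hMcard.trans hcard.symm).le (hMcard.trans hMtcard.symm).le
      hMtop (fun i hi => by rw [hμt i, if_neg hi]) hMttop heO heM heMt
      (fun b hbMt hbM => hmax b (Finset.mem_union_right _ (Finset.mem_sdiff.mpr ⟨hbMt, hbM⟩)))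
  rw [hΔ e, if_neg heO]
  linarith [hu e, two_nsmul (u e)]
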